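/- Let (K,M) be a cellular category. Suppose (f, g, u1, v1) with corner D1 and (f, g, u2, v2) with corner D2 are two cellular squares over the same span f: A → B, g: A → C (f, g, u1, v1, u2, v2 all in M). Then there exist an object E and morphisms w1: D1 → E and w2: D2 → E, both in M, such that w1 ∘ u1 = w2 ∘ u2 and w1 ∘ v1 = w2 ∘ v2. (Cellular squares have the uniqueness property.) -/

import Mathlib

open CategoryTheory CategoryTheory.Limits

universe v u

namespace Paper

/-- A preorder `I` is `κ`-directed if every subset of cardinality `< κ` has an upper bound. -/
def IsCardinalDirected (κ : Cardinal.{v}) (I : Type v) [Preorder I] : Prop :=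
  ∀ S : Set I, Cardinal.mk S < κ → ∃ j : I, ∀ i ∈ S, i ≤ j

section Cellular

variable {K : Type u} [Category.{v} K]

/-- The canonical cocone, with apex `F.obj j`, over the restriction of a chain `F` to `Set.Iio j`. -/
@[simps]
def chainCocone {J : Type v} [Preorder J] (F : J ⥤ K) (j : J) :
    Cocone ((Monotone.functor (f := (Subtype.val : Set.Iio j → J)) fun _ _ h => h) ⋙ F) where
  pt := F.obj j
  ι :=
    { app := fun i => F.map (homOfLE i.2.le)
      naturality := fun i i' h => by
        dsimp [Monotone.functor]
        rw [Category.comp_id, ← F.map_comp]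
        rfl }

variable [HasColimits K]

/-- `M` is closed under transfinite compositions: for every smooth chain indexed by a
well-ordered set, all of whose successor maps lie in `M`, the canonical morphism from the
first object to the colimit lies in `M`. -/
def TransfiniteClosed (M : MorphismProperty K) : Prop :=
  ∀ (J : Type v) (_ : LinearOrder J) (_ : OrderBot J) (_ : SuccOrder J) (_ : WellFoundedLT J)
    (F : J ⥤ K),
    (∀ j : J, Order.IsSuccLimit j → Nonempty (IsColimit (chainCocone F j))) →
    (∀ j : J, ¬IsMax j → M (F.map (homOfLE (Order.le_succ j)))) →
    ∀ c : Cocone F, IsColimit c → M (c.ι.app ⊥)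

/-- A cellular category: a cocomplete category equipped with a class of morphisms containing
all isomorphisms and closed under pushouts and transfinite compositions. -/
class CellularCategory (K : Type u) [Category.{v} K] [HasColimits K]
    (M : MorphismProperty K) : Prop where
  iso_mem : ∀ {X Y : K} (f : X ⟶ Y), IsIso f → M f
  comp_mem : ∀ {X Y Z : K} (f : X ⟶ Y) (g : Y ⟶ Z), M f → M g → M (f ≫ g)
  pushout_mem : ∀ {A B A' P : K} (f : A ⟶ B) (g : A ⟶ A') (u : B ⟶ P) (v : A' ⟶ P),
    IsPushout f g u v → M f → M v
  transfinite_mem : TransfiniteClosed M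

/-- A commutative square `(f, g, u, v)` is cellular if the induced morphism from the pushout
of the span `(f, g)` to the lower right corner lies in `M`. -/
def IsCellularSquare (M : MorphismProperty K) {A B C D : K}
    (f : A ⟶ B) (g : A ⟶ C) (u : B ⟶ D) (v : C ⟶ D) : Prop :=
  ∃ w : f ≫ u = g ≫ v, M (pushout.desc u v w)

/-- A morphism of the arrow category is a cellular square (all four morphisms in `M` and
the induced morphism from the pushout in `M`). -/
def CellularHom (M : MorphismProperty K) : ∀ ⦃X Y : Arrow K⦄, (X ⟶ Y) → Prop :=
  fun X Y sq => M sq.left ∧ M sq.right ∧ IsCellularSquare M sq.left X.hom Y.hom sq.right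

/-- `(K, M)` is coherent. -/
def Coherent (M : MorphismProperty K) : Prop :=
  ∀ {X Y Z : K} (f : X ⟶ Y) (g : Y ⟶ Z), M (f ≫ g) → M g → M f


/-- `(K, M)` has effective unions: pullbacks of cospans in `M` exist with projections in `M`,
and every pullback square of morphisms of `M` is a cellular square. -/
def EffectiveUnions (M : MorphismProperty K) : Prop :=
  (∀ {B C D : K} (u : B ⟶ D) (v : C ⟶ D), M u → M v →
    ∃ (A : K) (f : A ⟶ B) (g : A ⟶ C), M f ∧ M g ∧ IsPullback f g u v) ∧
  ∀ {A B C D : K} (f : A ⟶ B) (g : A ⟶ C) (u : B ⟶ D) (v : C ⟶ D),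
    M f → M g → M u → M v → IsPullback f g u v → IsCellularSquare M f g u v

end Cellular

section Retract

variable {K : Type u} [Category.{v} K]

/-- `f` is a retract of `f'` in the arrow category. -/
def IsArrowRetract {A B A' B' : K} (f : A ⟶ B) (f' : A' ⟶ B') : Prop :=
  ∃ (iA : A ⟶ A') (iB : B ⟶ B') (rA : A' ⟶ A) (rB : B' ⟶ B),
    iA ≫ rA = 𝟙 A ∧ iB ≫ rB = 𝟙 B ∧ iA ≫ f' = f ≫ iB ∧ rA ≫ f = f' ≫ rB

/-- `M` is closed under retracts in the arrow category. -/
def RetractClosed (M : MorphismProperty K) : Prop :=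
  ∀ {A B A' B' : K} (f : A ⟶ B) (f' : A' ⟶ B'), IsArrowRetract f f' → M f' → M f

end Retract

section Sub

variable {C : Type u} [Category.{v} C]
variable (Obj : C → Prop) (Hom : ∀ ⦃X Y : C⦄, (X ⟶ Y) → Prop)

/-- `F` is a diagram lying in the (not necessarily full) subcategory determined by
the object predicate `Obj` and the morphism predicate `Hom`. -/
def SubDiagram {I : Type*} [Preorder I] (F : I ⥤ C) : Prop :=
  (∀ i, Obj (F.obj i)) ∧ ∀ (i j : I) (h : i ⟶ j), Hom (F.map h)

/-- `c` is a colimit cocone for `F` in the subcategory determined by `Obj` and `Hom`: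
its apex and legs lie in the subcategory, and it enjoys the universal property with
respect to all cocones lying in the subcategory. -/
def SubIsColimit {I : Type*} [Preorder I] {F : I ⥤ C} (c : Cocone F) : Prop :=
  Obj c.pt ∧ (∀ i, Hom (c.ι.app i)) ∧
    ∀ c' : Cocone F, Obj c'.pt → (∀ i, Hom (c'.ι.app i)) →
      ∃ m : c.pt ⟶ c'.pt, Hom m ∧ (∀ i, c.ι.app i ≫ m = c'.ι.app i) ∧
        ∀ m' : c.pt ⟶ c'.pt, Hom m' → (∀ i, c.ι.app i ≫ m' = c'.ι.app i) → m' = m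

/-- `X` is a `κ`-presentable object of the subcategory determined by `Obj` and `Hom`. -/
def SubPresentable (κ : Cardinal.{v}) (X : C) : Prop :=
  ∀ I : Preord.{v}, IsCardinalDirected κ I →
    ∀ F : I ⥤ C, SubDiagram Obj Hom F → ∀ c : Cocone F, SubIsColimit Obj Hom c →
      (∀ h : X ⟶ c.pt, Hom h → ∃ (i : I) (g : X ⟶ F.obj i), Hom g ∧ g ≫ c.ι.app i = h) ∧
      (∀ (i : I) (g g' : X ⟶ F.obj i), Hom g → Hom g' → g ≫ c.ι.app i = g' ≫ c.ι.app i →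
        ∃ (j : I) (hij : i ≤ j), g ≫ F.map hij.hom = g' ≫ F.map hij.hom)

/-- The subcategory determined by `Obj` and `Hom` has `κ`-directed colimits. -/
def SubHasDirectedColimits (κ : Cardinal.{v}) : Prop :=
  ∀ I : Preord.{v}, IsCardinalDirected κ I →
    ∀ F : I ⥤ C, SubDiagram Obj Hom F → ∃ c : Cocone F, SubIsColimit Obj Hom c

/-- The subcategory determined by `Obj` and `Hom` is a `κ`-accessible category:
it has `κ`-directed colimits and every object is a `κ`-directed colimit of
`κ`-presentable objects of the subcategory. -/
def SubAccessible (κ : Cardinal.{v}) : Prop :=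
  SubHasDirectedColimits Obj Hom κ ∧
    ∀ X : C, Obj X → ∃ (I : Preord.{v}) (F : I ⥤ C) (c : Cocone F),
      IsCardinalDirected κ I ∧ SubDiagram Obj Hom F ∧
      (∀ i, SubPresentable Obj Hom κ (F.obj i)) ∧ SubIsColimit Obj Hom c ∧ c.pt = X

/-- The subcategory determined by `Obj` and `Hom` is closed under `κ`-directed colimits in `C`. -/
def SubClosed (κ : Cardinal.{v}) : Prop :=
  ∀ I : Preord.{v}, IsCardinalDirected κ I →
    ∀ F : I ⥤ C, SubDiagram Obj Hom F →
      ∀ c : Cocone F, IsColimit c → SubIsColimit Obj Hom c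

end Sub

section Access

variable (K : Type u) [Category.{v} K]

/-- `K` is a `κ`-accessible category. -/
def AccessibleCat (κ : Cardinal.{v}) : Prop :=
  SubAccessible (fun _ : K => True) (fun _ _ _ => True) κ

/-- `A` is a `κ`-presentable object of `K`. -/
def PresentableObj (κ : Cardinal.{v}) (A : K) : Prop :=
  SubPresentable (fun _ : K => True) (fun _ _ _ => True) κ A

variable {K}
variable (M : MorphismProperty K)

/-- `(K, M)` is `κ`-continuous: the wide subcategory `K_M` is closed under `κ`-directed
colimits in `K`. -/
def MContinuous (κ : Cardinal.{v}) : Prop :=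
  SubClosed (fun _ : K => True) M κ

/-- `(K, M)` is a `κ`-accessible cellular category: it is `κ`-continuous and both `K` and the
wide subcategory `K_M` are `κ`-accessible. -/
def MAccessible (κ : Cardinal.{v}) : Prop :=
  MContinuous M κ ∧ AccessibleCat K κ ∧ SubAccessible (fun _ : K => True) M κ

/-- The morphisms of `M` with `κ`-presentable domain and codomain. -/
def MBetweenPresentable (κ : Cardinal.{v}) : MorphismProperty K :=
  fun A B f => M f ∧ PresentableObj K κ A ∧ PresentableObj K κ B

end Access

section Cof

variable {K : Type u} [Category.{v} K]

/-- The closure of a class of morphisms under pushouts, transfinite compositions and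
retracts. -/
inductive CofClosure (X : MorphismProperty K) : ∀ {A B : K}, (A ⟶ B) → Prop
  | of {A B : K} (f : A ⟶ B) : X f → CofClosure X f
  | pushout {A B A' P : K} (f : A ⟶ B) (g : A ⟶ A') (u : B ⟶ P) (v : A' ⟶ P) :
      IsPushout f g u v → CofClosure X f → CofClosure X v
  | retract {A B A' B' : K} (f : A ⟶ B) (f' : A' ⟶ B') :
      IsArrowRetract f f' → CofClosure X f' → CofClosure X f
  | transfinite (J : Type v) (_ : LinearOrder J) (_ : OrderBot J) (_ : SuccOrder J)
      (_ : WellFoundedLT J) (F : J ⥤ K) :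
      (∀ j : J, Order.IsSuccLimit j → Nonempty (IsColimit (chainCocone F j))) →
      (∀ j : J, ¬IsMax j → CofClosure X (F.map (homOfLE (Order.le_succ j)))) →
      ∀ c : Cocone F, IsColimit c → CofClosure X (c.ι.app ⊥)

/-- The morphism property generated by a family of morphisms. -/
inductive OfFamily {ι : Type v} {A B : ι → K} (x : ∀ i, A i ⟶ B i) : ∀ {X Y : K}, (X ⟶ Y) → Prop
  | mk (i : ι) : OfFamily x (x i)

variable [HasColimits K]

/-- `(K, M)` is cofibrantly generated: `M` is the closure of a set of morphisms under
pushouts, transfinite compositions and retracts. -/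
def CofibrantlyGenerated (M : MorphismProperty K) : Prop :=
  ∃ (ι : Type v) (A B : ι → K) (x : ∀ i, A i ⟶ B i),
    ∀ {X Y : K} (f : X ⟶ Y), M f ↔ CofClosure (fun _ _ g => OfFamily x g) f

end Cof


section Uniqueness

variable {K : Type u} [Category.{v} K]

lemma exists_comm_sq_of_isStableUnderCobaseChange {M : MorphismProperty K}
    [M.IsStableUnderCobaseChange] {P D₁ D₂ : K} {t₁ : P ⟶ D₁} {t₂ : P ⟶ D₂} [HasPushout t₁ t₂]
    (ht₁ : M t₁) (ht₂ : M t₂) :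
    ∃ (E : K) (w₁ : D₁ ⟶ E) (w₂ : D₂ ⟶ E), M w₁ ∧ M w₂ ∧ t₁ ≫ w₁ = t₂ ≫ w₂ :=
  ⟨pushout t₁ t₂, pushout.inl t₁ t₂, pushout.inr t₁ t₂,
    M.pushout_inl t₁ t₂ ht₂, M.pushout_inr t₁ t₂ ht₁, pushout.condition⟩

variable [HasColimits K] {M : MorphismProperty K}

instance CellularCategory.isStableUnderCobaseChange [CellularCategory K M] :
    M.IsStableUnderCobaseChange where
  of_isPushout sq hf := CellularCategory.pushout_mem _ _ _ _ sq.flip hf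

lemma IsCellularSquare.exists_hom_from_pushout {A B C D : K} {f : A ⟶ B} {g : A ⟶ C}
    {u : B ⟶ D} {v : C ⟶ D} (h : IsCellularSquare M f g u v) :
    ∃ t : pushout f g ⟶ D, M t ∧ pushout.inl f g ≫ t = u ∧ pushout.inr f g ≫ t = v :=
  let ⟨w, hM⟩ := h
  ⟨pushout.desc u v w, hM, pushout.inl_desc u v w, pushout.inr_desc u v w⟩

theorem cellularSquares_uniqueness_general [M.IsStableUnderCobaseChange]
    {A B C D₁ D₂ : K} {f : A ⟶ B} {g : A ⟶ C}
    {u₁ : B ⟶ D₁} {v₁ : C ⟶ D₁} {u₂ : B ⟶ D₂} {v₂ : C ⟶ D₂}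
    (h₁ : IsCellularSquare M f g u₁ v₁) (h₂ : IsCellularSquare M f g u₂ v₂) :
    ∃ (E : K) (w₁ : D₁ ⟶ E) (w₂ : D₂ ⟶ E),
      M w₁ ∧ M w₂ ∧ u₁ ≫ w₁ = u₂ ≫ w₂ ∧ v₁ ≫ w₁ = v₂ ≫ w₂ := by
  obtain ⟨t₁, ht₁, rfl, rfl⟩ := h₁.exists_hom_from_pushout
  obtain ⟨t₂, ht₂, rfl, rfl⟩ := h₂.exists_hom_from_pushout
  obtain ⟨E, w₁, w₂, hw₁, hw₂, comm⟩ := exists_comm_sq_of_isStableUnderCobaseChange ht₁ ht₂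
  refine ⟨E, w₁, w₂, hw₁, hw₂, ?_, ?_⟩
  · simp only [Category.assoc, comm]
  · simp only [Category.assoc, comm]

end Uniqueness

/-- In a cellular category, any two cellular squares over the same span of
morphisms of `M` can be amalgamated by morphisms of `M`. -/
theorem cellularSquares_uniqueness
    {K : Type u} [Category.{v} K] [HasColimits K] (M : MorphismProperty K)
    [CellularCategory K M]
    {A B C D₁ D₂ : K} (f : A ⟶ B) (g : A ⟶ C)
    (u₁ : B ⟶ D₁) (v₁ : C ⟶ D₁) (u₂ : B ⟶ D₂) (v₂ : C ⟶ D₂)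
    (hf : M f) (hg : M g) (hu₁ : M u₁) (hv₁ : M v₁) (hu₂ : M u₂) (hv₂ : M v₂)
    (h₁ : IsCellularSquare M f g u₁ v₁) (h₂ : IsCellularSquare M f g u₂ v₂) :
    ∃ (E : K) (w₁ : D₁ ⟶ E) (w₂ : D₂ ⟶ E),
      M w₁ ∧ M w₂ ∧ u₁ ≫ w₁ = u₂ ≫ w₂ ∧ v₁ ≫ w₁ = v₂ ≫ w₂ :=
  cellularSquares_uniqueness_general h₁ h₂

end Paper
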